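/- With B_1, B_2, K as in the coideal subalgebra of U_q(sl3), and C_1 = B_1 B_2 - q B_2 B_1 - c_2 K/(q-q^{-1}) + (q+q^{-1}) c_1 K^{-1}/(q-q^{-1}), C_2 = B_2 B_1 - q B_1 B_2 - c_1 K^{-1}/(q-q^{-1}) + (q+q^{-1}) c_2 K/(q-q^{-1}), one has [C_1, C_2] = 0 and [K, C_i] = 0 for i = 1, 2. -/

import Mathlib

noncomputable section

/-- The defining relations of `U_q(sl3)` inside a `ℂ`-algebra `R`, with real `q`. -/
structure UqSL3 (R : Type*) [Ring R] [Algebra ℂ R] (q : ℝ)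
    (E₁ E₂ F₁ F₂ K₁ K₁' K₂ K₂' : R) : Prop where
  K₁mul : K₁ * K₁' = 1
  K₁mul' : K₁' * K₁ = 1
  K₂mul : K₂ * K₂' = 1
  K₂mul' : K₂' * K₂ = 1
  Kcomm : K₁ * K₂ = K₂ * K₁
  Kcomm' : K₁ * K₂' = K₂' * K₁
  Kcomm'' : K₁' * K₂ = K₂ * K₁'
  KE11 : K₁ * E₁ = ((q:ℂ) ^ (2:ℤ)) • (E₁ * K₁)
  KE12 : K₁ * E₂ = ((q:ℂ) ^ (-1:ℤ)) • (E₂ * K₁)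
  KE21 : K₂ * E₁ = ((q:ℂ) ^ (-1:ℤ)) • (E₁ * K₂)
  KE22 : K₂ * E₂ = ((q:ℂ) ^ (2:ℤ)) • (E₂ * K₂)
  KF11 : K₁ * F₁ = ((q:ℂ) ^ (-2:ℤ)) • (F₁ * K₁)
  KF12 : K₁ * F₂ = ((q:ℂ) ^ (1:ℤ)) • (F₂ * K₁)
  KF21 : K₂ * F₁ = ((q:ℂ) ^ (1:ℤ)) • (F₁ * K₂)
  KF22 : K₂ * F₂ = ((q:ℂ) ^ (-2:ℤ)) • (F₂ * K₂)
  EF11 : E₁ * F₁ - F₁ * E₁ = ((q:ℂ) - (q:ℂ)⁻¹)⁻¹ • (K₁ - K₁')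
  EF22 : E₂ * F₂ - F₂ * E₂ = ((q:ℂ) - (q:ℂ)⁻¹)⁻¹ • (K₂ - K₂')
  EF12 : E₁ * F₂ = F₂ * E₁
  EF21 : E₂ * F₁ = F₁ * E₂
  serreE₁ : E₁ ^ 2 * E₂ - ((q:ℂ) + (q:ℂ)⁻¹) • (E₁ * E₂ * E₁) + E₂ * E₁ ^ 2 = 0
  serreE₂ : E₂ ^ 2 * E₁ - ((q:ℂ) + (q:ℂ)⁻¹) • (E₂ * E₁ * E₂) + E₁ * E₂ ^ 2 = 0
  serreF₁ : F₁ ^ 2 * F₂ - ((q:ℂ) + (q:ℂ)⁻¹) • (F₁ * F₂ * F₁) + F₂ * F₁ ^ 2 = 0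
  serreF₂ : F₂ ^ 2 * F₁ - ((q:ℂ) + (q:ℂ)⁻¹) • (F₂ * F₁ * F₂) + F₁ * F₂ ^ 2 = 0

/-!
Write `[2] = q + q⁻¹`, `k₁ = K₁⁻¹ K₂` and `k₂ = K₂⁻¹ K₁`. The generators satisfy inhomogeneous
quantum Serre relations
* `B₁² B₂ - [2] B₁ B₂ B₁ + B₂ B₁² = B₁ z`,
* `B₂² B₁ - [2] B₂ B₁ B₂ + B₁ B₂² = B₂ w`,

where `z` and `w` are combinations of `k₁` and `k₂` with `w B₁ = B₁ z`. Multiplying the first by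
`B₂` on the left and the second by `B₁` on the right, and subtracting, shows that `B₁ B₂` and
`B₂ B₁` commute. As each of `k₁` and `k₂` has opposite weights on `B₁` and `B₂`, the elements
`B₁ B₂`, `B₂ B₁`, `k₁`, `k₂` commute pairwise, and `C₁`, `C₂` are linear combinations of them.

For the Serre relation, expand the Serre polynomial of `B₁ = F₁ - c₁ X` and `B₂ = F₂ - c₂ Y`, with
`X = E₂ K₁⁻¹` and `Y = E₁ K₂⁻¹`. The pure terms in `F₁, F₂` and in `X, Y` vanish by the Serre
relations of `U_q(sl₃)`. Each other term is a `q`-commutator with a multiple of `kᵢ - K₁⁻¹ K₂⁻¹`,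
in which the contribution of `K₁⁻¹ K₂⁻¹` cancels.
-/

section QCommute

variable {𝕜 R : Type*} [Field 𝕜] [Ring R] [Algebra 𝕜 R] {q : 𝕜} {m n : ℤ} {u v a b : R}

/-- Commutation up to a power of `q`: the element `u` acts on `a` with weight `n`. -/
def QCommute (q : 𝕜) (n : ℤ) (u a : R) : Prop :=
  u * a = q ^ n • (a * u)

namespace QCommute

theorem commute (h : QCommute q 0 u a) : Commute u a :=
  h.trans (by rw [zpow_zero, one_smul])

theorem of_commute (q : 𝕜) (h : Commute u a) : QCommute q 0 u a :=
  h.eq.trans (by rw [zpow_zero, one_smul])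

theorem mul_eq_pow {n : ℕ} (h : QCommute q n u a) : u * a = q ^ n • (a * u) :=
  h.trans (by rw [zpow_natCast])

theorem mul_eq_inv_pow {n : ℕ} (h : QCommute q (-n) u a) : u * a = q⁻¹ ^ n • (a * u) :=
  h.trans (by rw [zpow_neg, zpow_natCast, inv_pow])

theorem sub_smul_right (c : 𝕜) (ha : QCommute q n u a) (hb : QCommute q n u b) :
    QCommute q n u (a - c • b) := by
  unfold QCommute at *
  rw [mul_sub, sub_mul, mul_smul_comm, ha, hb, smul_mul_assoc, smul_sub, smul_comm c]

theorem mul_right (hq : q ≠ 0) (ha : QCommute q m u a) (hb : QCommute q n u b) :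
    QCommute q (m + n) u (a * b) := by
  unfold QCommute at *
  rw [← mul_assoc, ha, smul_mul_assoc, mul_assoc, hb, mul_smul_comm, smul_smul, mul_assoc,
    zpow_add₀ hq]

theorem mul_left (hq : q ≠ 0) (hu : QCommute q m u a) (hv : QCommute q n v a) :
    QCommute q (m + n) (u * v) a := by
  unfold QCommute at *
  rw [mul_assoc, hv, mul_smul_comm, ← mul_assoc, hu, smul_mul_assoc, smul_smul, mul_assoc,
    mul_comm, zpow_add₀ hq]

theorem mul_mul_mul (hub : QCommute q n u b) (a v : R) :
    a * u * (b * v) = q ^ n • (a * b * (u * v)) := by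
  have hub' : u * b = q ^ n • (b * u) := hub
  rw [mul_assoc a, ← mul_assoc u, hub', smul_mul_assoc, mul_smul_comm, mul_assoc b, mul_assoc a]

theorem inv_left (hq : q ≠ 0) (huv : u * v = 1) (hvu : v * u = 1) (h : QCommute q n u a) :
    QCommute q (-n) v a := by
  unfold QCommute at *
  have hconj : a * v = q ^ n • (v * a) := by
    calc a * v = v * (u * a) * v := by rw [← mul_assoc, hvu, one_mul]
      _ = q ^ n • (v * a) * (u * v) := by
        rw [h, mul_smul_comm, smul_mul_assoc, smul_mul_assoc, ← mul_assoc, ← mul_assoc]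
      _ = q ^ n • (v * a) := by rw [huv, mul_one]
  rw [hconj, zpow_neg, inv_smul_smul₀ (zpow_ne_zero n hq)]

end QCommute

end QCommute

section QuantumSerre

variable {𝕜 R : Type*} [Field 𝕜] [Ring R] [Algebra 𝕜 R] {q : 𝕜} {a x b y z w u v : R} {m n : ℤ}

/-- The quantum Serre polynomial in type `A₂`, quadratic in `a` and linear in `b`. -/
def quantumSerre (q : 𝕜) (a b : R) : R :=
  a ^ 2 * b - (q + q⁻¹) • (a * b * a) + b * a ^ 2

/-- The polarization of the quantum Serre polynomial in its quadratic argument. -/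
def quantumSerrePolar (q : 𝕜) (a x b : R) : R :=
  (a * x + x * a) * b - (q + q⁻¹) • (a * b * x + x * b * a) + b * (a * x + x * a)

theorem quantumSerre_inv (q : 𝕜) (a b : R) : quantumSerre q⁻¹ a b = quantumSerre q a b := by
  rw [quantumSerre, quantumSerre, inv_inv, add_comm q⁻¹]

theorem quantumSerre_sub_smul (q c d : 𝕜) (a x b y : R) :
    quantumSerre q (a - c • x) (b - d • y) =
      quantumSerre q a b - d • quantumSerre q a y - c • quantumSerrePolar q a x b
        + (c * d) • quantumSerrePolar q a x y + c ^ 2 • quantumSerre q x b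
        - (c ^ 2 * d) • quantumSerre q x y := by
  simp only [quantumSerre, quantumSerrePolar, pow_two, mul_add, add_mul, mul_sub, sub_mul,
    smul_mul_assoc, mul_smul_comm, mul_assoc]
  module

theorem quantumSerre_mul_mul (hq : q ≠ 0) (hua : QCommute q m u a) (hub : QCommute q n u b)
    (hva : QCommute q n v a) (huv : Commute u v) :
    quantumSerre q (a * u) (b * v) = q ^ (m + 2 * n) • (quantumSerre q a b * (u ^ 2 * v)) := by
  have haa : (a * u) ^ 2 = q ^ m • (a ^ 2 * u ^ 2) := by
    rw [pow_two, hua.mul_mul_mul, pow_two, pow_two]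
  have haab : (a * u) ^ 2 * (b * v) = q ^ (m + 2 * n) • (a ^ 2 * b * (u ^ 2 * v)) := by
    have huub : QCommute q (n + n) (u ^ 2) b := by rw [pow_two]; exact hub.mul_left hq hub
    rw [haa, smul_mul_assoc, huub.mul_mul_mul, smul_smul, ← zpow_add₀ hq, two_mul]
  have haba : a * u * (b * v) * (a * u) = q ^ (m + 2 * n) • (a * b * a * (u ^ 2 * v)) := by
    rw [hub.mul_mul_mul, smul_mul_assoc, (hua.mul_left hq hva).mul_mul_mul, smul_smul,
      ← zpow_add₀ hq, mul_assoc u, ← huv.eq, ← mul_assoc u, ← pow_two,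
      show n + (m + n) = m + 2 * n by ring]
  have hbaa : b * v * (a * u) ^ 2 = q ^ (m + 2 * n) • (b * a ^ 2 * (u ^ 2 * v)) := by
    have hvaa : QCommute q (n + n) v (a ^ 2) := by rw [pow_two]; exact hva.mul_right hq hva
    rw [haa, mul_smul_comm, hvaa.mul_mul_mul, smul_smul, ← zpow_add₀ hq, two_mul,
      (huv.pow_left 2).eq]
  rw [quantumSerre, haab, haba, hbaa, quantumSerre, add_mul, sub_mul, smul_mul_assoc, smul_add,
    smul_sub, smul_comm (q + q⁻¹)]

theorem quantumSerre_of_mul_eq (hq : q ≠ 0) (hba : b * a = q • (a * b) + z) :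
    quantumSerre q a b = z * a - q⁻¹ • (a * z) := by
  have haba : a * b * a = q • (a ^ 2 * b) + a * z := by
    rw [mul_assoc, hba, mul_add, mul_smul_comm, pow_two, mul_assoc]
  have hbaa : b * a ^ 2 = q ^ 2 • (a ^ 2 * b) + q • (a * z) + z * a := by
    rw [pow_two a, ← mul_assoc, hba, add_mul, smul_mul_assoc, haba, smul_add, smul_smul, pow_two q,
      pow_two a]
  rw [quantumSerre, haba, hbaa]
  match_scalars <;> field_simp <;> ring

theorem quantumSerrePolar_of_mul_eq_left (hq : q ≠ 0) (hxa : QCommute q 2 x a)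
    (hxb : x * b = q⁻¹ • (b * x) + z) :
    quantumSerrePolar q a x b = (q + q⁻¹) • (q • (a * z) - z * a) := by
  have hxa' : x * a = q ^ 2 • (a * x) := hxa.mul_eq_pow
  have haxb : a * x * b = q⁻¹ • (a * b * x) + a * z := by
    rw [mul_assoc, hxb, mul_add, mul_smul_comm, mul_assoc]
  have hxba : x * b * a = q • (b * (a * x)) + z * a := by
    rw [hxb, add_mul, smul_mul_assoc, mul_assoc, hxa', mul_smul_comm, smul_smul, pow_two,
      inv_mul_cancel_left₀ hq]
  rw [quantumSerrePolar, hxba, hxa', add_mul, smul_mul_assoc, mul_add, mul_smul_comm, haxb]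
  match_scalars <;> field_simp <;> ring

theorem quantumSerrePolar_of_mul_eq_right (hq : q ≠ 0) (hxa : QCommute q 2 x a)
    (hba : b * a = q⁻¹ • (a * b) + z) :
    quantumSerrePolar q a x b = (q + q⁻¹) • (q • (z * x) - x * z) := by
  have hxa' : x * a = q ^ 2 • (a * x) := hxa.mul_eq_pow
  have hbax : b * (a * x) = q⁻¹ • (a * b * x) + z * x := by
    rw [← mul_assoc, hba, add_mul, smul_mul_assoc]
  have hxba : x * b * a = q • (a * x * b) + x * z := by
    rw [mul_assoc, hba, mul_add, mul_smul_comm, ← mul_assoc, hxa', smul_mul_assoc, smul_smul,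
      pow_two, inv_mul_cancel_left₀ hq]
  rw [quantumSerrePolar, hxba, hxa', add_mul, smul_mul_assoc, mul_add, mul_smul_comm, hbax]
  match_scalars <;> field_simp <;> ring

theorem commute_mul_of_quantumSerre (hab : quantumSerre q a b = a * z)
    (hba : quantumSerre q b a = b * w) (hwa : w * a = a * z) : Commute (a * b) (b * a) := by
  have hserre : b * quantumSerre q a b = quantumSerre q b a * a := by
    rw [hab, hba, mul_assoc, hwa]
  have hdiff : b * quantumSerre q a b - quantumSerre q b a * a =
      b * a * (a * b) - a * b * (b * a) := by
    simp only [quantumSerre, pow_two, mul_add, add_mul, mul_sub, sub_mul, smul_mul_assoc,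
      mul_smul_comm, mul_assoc]
    abel
  exact (sub_eq_zero.mp (hdiff.symm.trans (sub_eq_zero.mpr hserre))).symm

end QuantumSerre

section Coideal

variable {𝕜 R : Type*} [Field 𝕜] [Ring R] [Algebra 𝕜 R]

/-- The relations between the generators of the coideal subalgebra. In the notation of the theorem
`k₁ = K⁻¹` and `k₂ = K`, which makes them symmetric under exchanging the indices. -/
structure CoidealRelations (q c₁ c₂ : 𝕜) (b₁ b₂ k₁ k₂ : R) : Prop where
  commute_k : Commute k₁ k₂
  k₁_b₁ : QCommute q 3 k₁ b₁
  k₁_b₂ : QCommute q (-3) k₁ b₂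
  k₂_b₁ : QCommute q (-3) k₂ b₁
  k₂_b₂ : QCommute q 3 k₂ b₂
  serre₁ : quantumSerre q b₁ b₂ =
    b₁ * ((q + q⁻¹) • ((q * c₁) • k₁ + (q⁻¹ ^ 2 * c₂) • k₂))
  serre₂ : quantumSerre q b₂ b₁ =
    b₂ * ((q + q⁻¹) • ((q * c₂) • k₂ + (q⁻¹ ^ 2 * c₁) • k₁))

/-- The `q`-commutator of `b` and `b'` with its correction by torus elements: `C₁` is obtained from
`(c₁, c₂, B₁, B₂, K⁻¹, K)`, and `C₂` by exchanging the indices. -/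
def coidealBracket (q c c' : 𝕜) (b b' k k' : R) : R :=
  b * b' - q • (b' * b) - (c' / (q - q⁻¹)) • k' + ((q + q⁻¹) * c / (q - q⁻¹)) • k

theorem commute_coidealBracket {x b b' k k' : R} (q c c' : 𝕜) (hbb' : Commute x (b * b'))
    (hb'b : Commute x (b' * b)) (hk : Commute x k) (hk' : Commute x k') :
    Commute x (coidealBracket q c c' b b' k k') :=
  ((hbb'.sub_right (hb'b.smul_right _)).sub_right (hk'.smul_right _)).add_right (hk.smul_right _)

namespace CoidealRelations

variable {q c₁ c₂ : 𝕜} {b₁ b₂ k₁ k₂ : R}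

theorem swap (h : CoidealRelations q c₁ c₂ b₁ b₂ k₁ k₂) :
    CoidealRelations q c₂ c₁ b₂ b₁ k₂ k₁ :=
  ⟨h.commute_k.symm, h.k₂_b₂, h.k₂_b₁, h.k₁_b₂, h.k₁_b₁, h.serre₂, h.serre₁⟩

theorem commute_k₁_mul (hq : q ≠ 0) (h : CoidealRelations q c₁ c₂ b₁ b₂ k₁ k₂) :
    Commute k₁ (b₁ * b₂) :=
  (h.k₁_b₁.mul_right hq h.k₁_b₂).commute

theorem commute_k₂_mul (hq : q ≠ 0) (h : CoidealRelations q c₁ c₂ b₁ b₂ k₁ k₂) :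
    Commute k₂ (b₁ * b₂) :=
  (h.k₂_b₁.mul_right hq h.k₂_b₂).commute

theorem commute_mul_mul (hq : q ≠ 0) (h : CoidealRelations q c₁ c₂ b₁ b₂ k₁ k₂) :
    Commute (b₁ * b₂) (b₂ * b₁) := by
  have hk₁ : k₁ * b₁ = q ^ 3 • (b₁ * k₁) := h.k₁_b₁.mul_eq_pow
  have hk₂ : k₂ * b₁ = q⁻¹ ^ 3 • (b₁ * k₂) := h.k₂_b₁.mul_eq_inv_pow
  refine commute_mul_of_quantumSerre h.serre₁ h.serre₂ ?_
  simp only [smul_mul_assoc, mul_smul_comm, add_mul, mul_add, hk₁, hk₂]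
  match_scalars <;> field_simp

theorem commute_k₁_coidealBracket (hq : q ≠ 0) (h : CoidealRelations q c₁ c₂ b₁ b₂ k₁ k₂) :
    Commute k₁ (coidealBracket q c₁ c₂ b₁ b₂ k₁ k₂) :=
  commute_coidealBracket q c₁ c₂ (h.commute_k₁_mul hq) (h.swap.commute_k₂_mul hq) (.refl k₁)
    h.commute_k

theorem commute_k₂_coidealBracket (hq : q ≠ 0) (h : CoidealRelations q c₁ c₂ b₁ b₂ k₁ k₂) :
    Commute k₂ (coidealBracket q c₁ c₂ b₁ b₂ k₁ k₂) :=
  commute_coidealBracket q c₁ c₂ (h.commute_k₂_mul hq) (h.swap.commute_k₁_mul hq)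
    h.commute_k.symm (.refl k₂)

theorem commute_coidealBracket_swap (hq : q ≠ 0) (h : CoidealRelations q c₁ c₂ b₁ b₂ k₁ k₂) :
    Commute (coidealBracket q c₁ c₂ b₁ b₂ k₁ k₂) (coidealBracket q c₂ c₁ b₂ b₁ k₂ k₁) := by
  have hb₁b₂ : Commute (b₁ * b₂) (coidealBracket q c₁ c₂ b₁ b₂ k₁ k₂) :=
    commute_coidealBracket q c₁ c₂ (.refl _) (h.commute_mul_mul hq)
      (h.commute_k₁_mul hq).symm (h.commute_k₂_mul hq).symm
  have hb₂b₁ : Commute (b₂ * b₁) (coidealBracket q c₁ c₂ b₁ b₂ k₁ k₂) :=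
    commute_coidealBracket q c₁ c₂ (h.commute_mul_mul hq).symm (.refl _)
      (h.swap.commute_k₂_mul hq).symm (h.swap.commute_k₁_mul hq).symm
  exact commute_coidealBracket q c₂ c₁ hb₂b₁.symm hb₁b₂.symm
    (h.commute_k₂_coidealBracket hq).symm (h.commute_k₁_coidealBracket hq).symm

end CoidealRelations

end Coideal

namespace UqSL3

variable {R : Type*} [Ring R] [Algebra ℂ R] {q : ℝ} {E₁ E₂ F₁ F₂ K₁ K₁' K₂ K₂' : R}

theorem swap (h : UqSL3 R q E₁ E₂ F₁ F₂ K₁ K₁' K₂ K₂') :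
    UqSL3 R q E₂ E₁ F₂ F₁ K₂ K₂' K₁ K₁' where
  K₁mul := h.K₂mul
  K₁mul' := h.K₂mul'
  K₂mul := h.K₁mul
  K₂mul' := h.K₁mul'
  Kcomm := h.Kcomm.symm
  Kcomm' := h.Kcomm''.symm
  Kcomm'' := h.Kcomm'.symm
  KE11 := h.KE22
  KE12 := h.KE21
  KE21 := h.KE12
  KE22 := h.KE11
  KF11 := h.KF22
  KF12 := h.KF21
  KF21 := h.KF12
  KF22 := h.KF11
  EF11 := h.EF22
  EF22 := h.EF11
  EF12 := h.EF21
  EF21 := h.EF12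
  serreE₁ := h.serreE₂
  serreE₂ := h.serreE₁
  serreF₁ := h.serreF₂
  serreF₂ := h.serreF₁

theorem commute_K₁'_K₂' (h : UqSL3 R q E₁ E₂ F₁ F₂ K₁ K₁' K₂ K₂') : Commute K₁' K₂' :=
  Commute.units_inv_left (u := ⟨K₁, K₁', h.K₁mul, h.K₁mul'⟩) h.Kcomm'

theorem commute_k₁_K₁' (h : UqSL3 R q E₁ E₂ F₁ F₂ K₁ K₁' K₂ K₂') : Commute (K₁' * K₂) K₁' :=
  (Commute.refl K₁').mul_left (Eq.symm h.Kcomm'')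

theorem commute_k₁_K₂' (h : UqSL3 R q E₁ E₂ F₁ F₂ K₁ K₁' K₂ K₂') : Commute (K₁' * K₂) K₂' :=
  h.commute_K₁'_K₂'.mul_left (h.K₂mul.trans h.K₂mul'.symm)

theorem commute_k₁_k₂ (h : UqSL3 R q E₁ E₂ F₁ F₂ K₁ K₁' K₂ K₂') :
    Commute (K₁' * K₂) (K₂' * K₁) :=
  h.commute_k₁_K₂'.mul_right
    (Commute.mul_left (h.K₁mul'.trans h.K₁mul.symm) (Eq.symm h.Kcomm))

section Weights

variable (hq : (q : ℂ) ≠ 0) (h : UqSL3 R q E₁ E₂ F₁ F₂ K₁ K₁' K₂ K₂')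
include hq h

theorem qCommute_K₁'_E₁ : QCommute (q : ℂ) (-2) K₁' E₁ :=
  QCommute.inv_left hq h.K₁mul h.K₁mul' h.KE11

theorem qCommute_K₁'_E₂ : QCommute (q : ℂ) 1 K₁' E₂ :=
  QCommute.inv_left hq h.K₁mul h.K₁mul' h.KE12

theorem qCommute_K₁'_F₁ : QCommute (q : ℂ) 2 K₁' F₁ :=
  QCommute.inv_left hq h.K₁mul h.K₁mul' h.KF11

theorem qCommute_K₁'_F₂ : QCommute (q : ℂ) (-1) K₁' F₂ :=
  QCommute.inv_left hq h.K₁mul h.K₁mul' h.KF12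

theorem qCommute_k₁_F₁ : QCommute (q : ℂ) 3 (K₁' * K₂) F₁ :=
  (h.qCommute_K₁'_F₁ hq).mul_left hq h.KF21

theorem qCommute_k₁_F₂ : QCommute (q : ℂ) (-3) (K₁' * K₂) F₂ :=
  (h.qCommute_K₁'_F₂ hq).mul_left hq h.KF22

theorem qCommute_k₁_X : QCommute (q : ℂ) 3 (K₁' * K₂) (E₂ * K₁') :=
  ((h.qCommute_K₁'_E₂ hq).mul_left hq h.KE22).mul_right hq (.of_commute _ h.commute_k₁_K₁')

theorem qCommute_k₁_Y : QCommute (q : ℂ) (-3) (K₁' * K₂) (E₁ * K₂') :=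
  ((h.qCommute_K₁'_E₁ hq).mul_left hq h.KE21).mul_right hq (.of_commute _ h.commute_k₁_K₂')

theorem qCommute_K₁'_mul_K₂'_F₁ : QCommute (q : ℂ) 1 (K₁' * K₂') F₁ :=
  (h.qCommute_K₁'_F₁ hq).mul_left hq (h.swap.qCommute_K₁'_F₂ hq)

theorem qCommute_K₁'_mul_K₂'_X : QCommute (q : ℂ) (-1) (K₁' * K₂') (E₂ * K₁') :=
  ((h.qCommute_K₁'_E₂ hq).mul_left hq (h.swap.qCommute_K₁'_E₁ hq)).mul_right hq
    (.of_commute _ ((Commute.refl K₁').mul_left h.commute_K₁'_K₂'.symm))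

theorem qCommute_X_F₁ : QCommute (q : ℂ) 2 (E₂ * K₁') F₁ :=
  (QCommute.of_commute _ h.EF21).mul_left hq (h.qCommute_K₁'_F₁ hq)

theorem qCommute_k₁_B₁ (c : ℂ) : QCommute (q : ℂ) 3 (K₁' * K₂) (F₁ - c • (E₂ * K₁')) :=
  (h.qCommute_k₁_F₁ hq).sub_smul_right c (h.qCommute_k₁_X hq)

theorem qCommute_k₁_B₂ (c : ℂ) : QCommute (q : ℂ) (-3) (K₁' * K₂) (F₂ - c • (E₁ * K₂')) :=
  (h.qCommute_k₁_F₂ hq).sub_smul_right c (h.qCommute_k₁_Y hq)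

end Weights

section Serre

variable (hq : (q : ℂ) ≠ 0) (h : UqSL3 R q E₁ E₂ F₁ F₂ K₁ K₁' K₂ K₂')
include hq h

theorem X_mul_F₂ :
    E₂ * K₁' * F₂ = (q : ℂ)⁻¹ • (F₂ * (E₂ * K₁')) +
      ((q : ℂ)⁻¹ * ((q : ℂ) - (q : ℂ)⁻¹)⁻¹) • (K₁' * K₂ - K₁' * K₂') := by
  have hKF : K₁' * F₂ = (q : ℂ)⁻¹ ^ 1 • (F₂ * K₁') := (h.qCommute_K₁'_F₂ hq).mul_eq_inv_pow
  have hEF : E₂ * F₂ = ((q : ℂ) - (q : ℂ)⁻¹)⁻¹ • (K₂ - K₂') + F₂ * E₂ :=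
    sub_eq_iff_eq_add.mp h.EF22
  rw [mul_assoc, hKF, pow_one, mul_smul_comm, ← mul_assoc, hEF, add_mul, smul_mul_assoc, sub_mul,
    ← h.Kcomm'', h.commute_K₁'_K₂'.symm.eq, smul_add, smul_smul, mul_assoc, add_comm]

theorem Y_mul_F₁ :
    E₁ * K₂' * F₁ = (q : ℂ)⁻¹ • (F₁ * (E₁ * K₂')) +
      ((q : ℂ)⁻¹ * ((q : ℂ) - (q : ℂ)⁻¹)⁻¹) • (K₂' * K₁ - K₁' * K₂') := by
  rw [h.commute_K₁'_K₂'.eq]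
  exact h.swap.X_mul_F₂ hq

theorem quantumSerre_X_Y : quantumSerre (q : ℂ) (E₂ * K₁') (E₁ * K₂') = 0 := by
  have hE : quantumSerre (q : ℂ) E₂ E₁ = 0 := h.serreE₂
  rw [quantumSerre_mul_mul hq (h.qCommute_K₁'_E₂ hq) (h.qCommute_K₁'_E₁ hq)
    (h.swap.qCommute_K₁'_E₁ hq) h.commute_K₁'_K₂', hE, zero_mul, smul_zero]

variable (hq₂ : (q : ℂ) ^ 2 - 1 ≠ 0)
include hq₂

theorem quantumSerre_F₁_Y :
    quantumSerre (q : ℂ) F₁ (E₁ * K₂') =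
      -(((q : ℂ) + (q : ℂ)⁻¹) * (q : ℂ)⁻¹ ^ 2) • (F₁ * (K₂' * K₁)) := by
  have hk : K₂' * K₁ * F₁ = (q : ℂ)⁻¹ ^ 3 • (F₁ * (K₂' * K₁)) :=
    (h.swap.qCommute_k₁_F₂ hq).mul_eq_inv_pow
  have hL : K₁' * K₂' * F₁ = (q : ℂ) ^ 1 • (F₁ * (K₁' * K₂')) :=
    (h.qCommute_K₁'_mul_K₂'_F₁ hq).mul_eq_pow
  rw [← quantumSerre_inv, quantumSerre_of_mul_eq (inv_ne_zero hq) (h.Y_mul_F₁ hq)]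
  simp only [smul_mul_assoc, mul_smul_comm, sub_mul, mul_sub, hk, hL]
  match_scalars <;> field_simp <;> ring

theorem quantumSerre_X_F₂ :
    quantumSerre (q : ℂ) (E₂ * K₁') F₂ =
      -(((q : ℂ) + (q : ℂ)⁻¹) * (q : ℂ)) • (E₂ * K₁' * (K₁' * K₂)) := by
  have hk : K₁' * K₂ * (E₂ * K₁') = (q : ℂ) ^ 3 • (E₂ * K₁' * (K₁' * K₂)) :=
    (h.qCommute_k₁_X hq).mul_eq_pow
  have hL : K₁' * K₂' * (E₂ * K₁') = (q : ℂ)⁻¹ ^ 1 • (E₂ * K₁' * (K₁' * K₂')) :=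
    (h.qCommute_K₁'_mul_K₂'_X hq).mul_eq_inv_pow
  have hFX : F₂ * (E₂ * K₁') = (q : ℂ) • (E₂ * K₁' * F₂) +
      -(((q : ℂ) - (q : ℂ)⁻¹)⁻¹ • (K₁' * K₂ - K₁' * K₂')) := by
    rw [h.X_mul_F₂ hq, smul_add, smul_inv_smul₀ hq, smul_smul, mul_inv_cancel_left₀ hq,
      add_neg_cancel_right]
  rw [quantumSerre_of_mul_eq hq hFX]
  simp only [neg_mul, mul_neg, smul_mul_assoc, mul_smul_comm, sub_mul, mul_sub, hk, hL]
  match_scalars <;> field_simp <;> ring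

theorem quantumSerrePolar_F₁_X_F₂ :
    quantumSerrePolar (q : ℂ) F₁ (E₂ * K₁') F₂ =
      -(((q : ℂ) + (q : ℂ)⁻¹) * (q : ℂ)) • (F₁ * (K₁' * K₂)) := by
  have hk : K₁' * K₂ * F₁ = (q : ℂ) ^ 3 • (F₁ * (K₁' * K₂)) :=
    (h.qCommute_k₁_F₁ hq).mul_eq_pow
  have hL : K₁' * K₂' * F₁ = (q : ℂ) ^ 1 • (F₁ * (K₁' * K₂')) :=
    (h.qCommute_K₁'_mul_K₂'_F₁ hq).mul_eq_pow
  rw [quantumSerrePolar_of_mul_eq_left hq (h.qCommute_X_F₁ hq) (h.X_mul_F₂ hq)]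
  simp only [smul_mul_assoc, mul_smul_comm, sub_mul, mul_sub, hk, hL]
  match_scalars <;> field_simp <;> ring

theorem quantumSerrePolar_F₁_X_Y :
    quantumSerrePolar (q : ℂ) F₁ (E₂ * K₁') (E₁ * K₂') =
      -(((q : ℂ) + (q : ℂ)⁻¹) * (q : ℂ)⁻¹ ^ 2) • (E₂ * K₁' * (K₂' * K₁)) := by
  have hk : K₂' * K₁ * (E₂ * K₁') = (q : ℂ)⁻¹ ^ 3 • (E₂ * K₁' * (K₂' * K₁)) :=
    (h.swap.qCommute_k₁_Y hq).mul_eq_inv_pow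
  have hL : K₁' * K₂' * (E₂ * K₁') = (q : ℂ)⁻¹ ^ 1 • (E₂ * K₁' * (K₁' * K₂')) :=
    (h.qCommute_K₁'_mul_K₂'_X hq).mul_eq_inv_pow
  rw [quantumSerrePolar_of_mul_eq_right hq (h.qCommute_X_F₁ hq) (h.Y_mul_F₁ hq)]
  simp only [smul_mul_assoc, mul_smul_comm, sub_mul, mul_sub, hk, hL]
  match_scalars <;> field_simp <;> ring

theorem quantumSerre_B₁_B₂ (c₁ c₂ : ℂ) :
    quantumSerre (q : ℂ) (F₁ - c₁ • (E₂ * K₁')) (F₂ - c₂ • (E₁ * K₂')) =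
      (F₁ - c₁ • (E₂ * K₁')) * (((q : ℂ) + (q : ℂ)⁻¹) •
        (((q : ℂ) * c₁) • (K₁' * K₂) + ((q : ℂ)⁻¹ ^ 2 * c₂) • (K₂' * K₁))) := by
  have hF : quantumSerre (q : ℂ) F₁ F₂ = 0 := h.serreF₁
  rw [quantumSerre_sub_smul, hF, h.quantumSerre_X_Y hq, h.quantumSerre_F₁_Y hq hq₂,
    h.quantumSerre_X_F₂ hq hq₂, h.quantumSerrePolar_F₁_X_F₂ hq hq₂,
    h.quantumSerrePolar_F₁_X_Y hq hq₂]
  simp only [mul_smul_comm, mul_add, sub_mul, smul_mul_assoc]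
  module

theorem coidealRelations (c₁ c₂ : ℂ) :
    CoidealRelations (q : ℂ) c₁ c₂ (F₁ - c₁ • (E₂ * K₁')) (F₂ - c₂ • (E₁ * K₂'))
      (K₁' * K₂) (K₂' * K₁) where
  commute_k := h.commute_k₁_k₂
  k₁_b₁ := h.qCommute_k₁_B₁ hq c₁
  k₁_b₂ := h.qCommute_k₁_B₂ hq c₂
  k₂_b₁ := h.swap.qCommute_k₁_B₂ hq c₁
  k₂_b₂ := h.swap.qCommute_k₁_B₁ hq c₂
  serre₁ := h.quantumSerre_B₁_B₂ hq hq₂ c₁ c₂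
  serre₂ := h.swap.quantumSerre_B₁_B₂ hq hq₂ c₂ c₁

end Serre

end UqSL3

theorem stmt_general {R : Type*} [Ring R] [Algebra ℂ R] (q : ℝ) (hq0 : q ≠ 0) (hq1 : q ^ 2 ≠ 1)
    (c₁ c₂ : ℂ) (E₁ E₂ F₁ F₂ K₁ K₁' K₂ K₂' : R)
    (h : UqSL3 R q E₁ E₂ F₁ F₂ K₁ K₁' K₂ K₂') (B₁ B₂ K K' C₁ : R)
    (hB₁ : B₁ = F₁ - c₁ • (E₂ * K₁')) (hB₂ : B₂ = F₂ - c₂ • (E₁ * K₂'))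
    (hK : K = K₁ * K₂') (hK' : K' = K₁' * K₂)
    (hC₁ : C₁ = B₁ * B₂ - (q : ℂ) • (B₂ * B₁)
      - (c₂ / ((q : ℂ) - (q : ℂ)⁻¹)) • K
      + ((((q : ℂ) + (q : ℂ)⁻¹) * c₁) / ((q : ℂ) - (q : ℂ)⁻¹)) • K') (C₂ : R)
    (hC₂ : C₂ = B₂ * B₁ - (q : ℂ) • (B₁ * B₂)
      - (c₁ / ((q : ℂ) - (q : ℂ)⁻¹)) • K'
      + ((((q : ℂ) + (q : ℂ)⁻¹) * c₂) / ((q : ℂ) - (q : ℂ)⁻¹)) • K) :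
    C₁ * C₂ = C₂ * C₁ ∧ K * C₁ = C₁ * K ∧ K * C₂ = C₂ * K := by
  have hq : (q : ℂ) ≠ 0 := by exact_mod_cast hq0
  have hq₂ : (q : ℂ) ^ 2 - 1 ≠ 0 := by exact_mod_cast sub_ne_zero.mpr hq1
  subst hB₁ hB₂ hK hK' hC₁ hC₂
  rw [h.Kcomm']
  have hrel := h.coidealRelations hq hq₂ c₁ c₂
  exact ⟨hrel.commute_coidealBracket_swap hq, hrel.commute_k₂_coidealBracket hq,
    hrel.swap.commute_k₁_coidealBracket hq⟩

theorem stmt {R : Type*} [Ring R] [Algebra ℂ R] (q : ℝ) (hq0 : 0 < q) (hq1 : q < 1)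
    (c₁ c₂ : ℂ) (hc₁ : c₁ ≠ 0) (hc₂ : c₂ ≠ 0)
    (E₁ E₂ F₁ F₂ K₁ K₁' K₂ K₂' : R)
    (h : UqSL3 R q E₁ E₂ F₁ F₂ K₁ K₁' K₂ K₂') (B₁ B₂ K K' C₁ : R)
    (hB₁ : B₁ = F₁ - c₁ • (E₂ * K₁')) (hB₂ : B₂ = F₂ - c₂ • (E₁ * K₂'))
    (hK : K = K₁ * K₂') (hK' : K' = K₁' * K₂)
    (hC₁ : C₁ = B₁ * B₂ - (q:ℂ) • (B₂ * B₁)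
      - (c₂ / ((q:ℂ) - (q:ℂ)⁻¹)) • K + ((((q:ℂ) + (q:ℂ)⁻¹) * c₁) / ((q:ℂ) - (q:ℂ)⁻¹)) • K') (C₂ : R)
    (hC₂ : C₂ = B₂ * B₁ - (q:ℂ) • (B₁ * B₂)
      - (c₁ / ((q:ℂ) - (q:ℂ)⁻¹)) • K' + ((((q:ℂ) + (q:ℂ)⁻¹) * c₂) / ((q:ℂ) - (q:ℂ)⁻¹)) • K) :
    C₁ * C₂ = C₂ * C₁ ∧ K * C₁ = C₁ * K ∧ K * C₂ = C₂ * K :=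
  stmt_general q hq0.ne' (pow_lt_one₀ hq0.le hq1 two_ne_zero).ne c₁ c₂ E₁ E₂ F₁ F₂ K₁ K₁' K₂ K₂' h
    B₁ B₂ K K' C₁ hB₁ hB₂ hK hK' hC₁ C₂ hC₂
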